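/- Under Assumption 3, assume X2 ∩ X4 and X1 ∩ X3 are nonempty and let z_i = max{w_i : w ∈ X2 ∩ X4} and y_i = min{w_i : w ∈ X1 ∩ X3}. Then for every k ≥ 1 and every i ∈ {1,…,n}: u^{k+1}_i ≤ u^{k+1/2}_i ≤ u^k_i and l^{k+1}_i ≥ l^{k+1/2}_i ≥ l^k_i (the upper-bound sequence is componentwise nonincreasing and the lower-bound sequence componentwise nondecreasing), and moreover u^k_i ≥ z_i and l^k_i ≤ y_i. -/

import Mathlib

/-!
The componentwise monotonicity in `k` is built into the recursions: each sweep takes a minimum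
with (resp. a maximum with, resp. a least point above) the previous bound.

For the comparison with `z` and `y`, it suffices that every `w ∈ X2 ∩ X4` satisfies `w ≤ u^k` and
every `w ∈ X1 ∩ X3` satisfies `l^k ≤ w`. Both follow by induction on `k`, since each of the four
sweeps preserves the comparison; inside a sweep the induction runs along the index, forwards for
`B2`, `B3` and backwards for `B1`, `B4`. For `B2` this uses that `ℓ` is nondecreasing
(`ell_monotone`), the only place where the full strength of Assumption 3 enters; `B3` and `B4` only
need `1 - hγ > 0`, and `B1` only the leastness in its definition.
-/

open Filter Topology


/-- The function ℓ from the speed-planning problem. -/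
noncomputable def ell (h γ g M Pmax μ w : ℝ) : ℝ :=
  if w ≤ (Pmax / (M * g * μ)) ^ 2 then (1 - h * γ) * w + h * g * μ
  else (1 - h * γ) * w + h * Pmax / (M * Real.sqrt w)

/-- Membership in `X1`. -/
def memX1 (n : ℕ) (h γ g M Pmax μ c : ℝ) (α wmin w : ℕ → ℝ) : Prop :=
  (∀ i, 1 ≤ i → i ≤ n → wmin i ≤ w i) ∧
  (∀ j, 1 ≤ j → j ≤ n - 1 →
    w (j + 1) ≤ ell h γ g M Pmax μ (w j) - h * g * (Real.sin (α j) + c))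

/-- Membership in `X2`. -/
def memX2 (n : ℕ) (h γ g M Pmax μ c : ℝ) (α wmax w : ℕ → ℝ) : Prop :=
  (∀ i, 1 ≤ i → i ≤ n → w i ≤ wmax i) ∧
  (∀ j, 1 ≤ j → j ≤ n - 1 →
    w (j + 1) ≤ ell h γ g M Pmax μ (w j) - h * g * (Real.sin (α j) + c))

/-- Membership in `X3`. -/
def memX3 (n : ℕ) (h γ g μ c : ℝ) (α wmin w : ℕ → ℝ) : Prop :=
  (∀ i, 1 ≤ i → i ≤ n → wmin i ≤ w i) ∧
  (∀ j, 1 ≤ j → j ≤ n - 1 →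
    (1 - h * γ) * w j - h * g * (Real.sin (α j) + c + μ) ≤ w (j + 1))

/-- Membership in `X4`. -/
def memX4 (n : ℕ) (h γ g μ c : ℝ) (α wmax w : ℕ → ℝ) : Prop :=
  (∀ i, 1 ≤ i → i ≤ n → w i ≤ wmax i) ∧
  (∀ j, 1 ≤ j → j ≤ n - 1 →
    (1 - h * γ) * w j - h * g * (Real.sin (α j) + c + μ) ≤ w (j + 1))

/-- Monotonicity of `x ↦ A x + q / √x` beyond `x = r²`, written in the variable `s = √x`: the slope
condition is `A - q / (2 x^{3/2}) ≥ 0` at `x = r²`. -/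
lemma mul_sq_add_div_le {A q r s t : ℝ} (hr : 0 < r) (hq : 0 ≤ q)
    (hA : q / (2 * r ^ 3) ≤ A) (hs : r ≤ s) (hst : s ≤ t) :
    A * s ^ 2 + q / s ≤ A * t ^ 2 + q / t := by
  have hs0 : 0 < s := hr.trans_le hs
  have ht0 : 0 < t := hs0.trans_le hst
  have h1 : 2 * r ^ 3 ≤ s * t * (s + t) := by
    have e1 : r * r ≤ s * t := mul_le_mul hs (hs.trans hst) hr.le hs0.le
    have e2 : r * r * (2 * r) ≤ s * t * (s + t) :=
      mul_le_mul e1 (by linarith) (by positivity) (by positivity)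
    nlinarith [e2]
  have h2 : q / (s * t * (s + t)) ≤ A :=
    (div_le_div_of_nonneg_left hq (by positivity) h1).trans hA
  have h3 : q / s - q / t = q / (s * t * (s + t)) * (t ^ 2 - s ^ 2) := by
    field_simp
    ring
  have h4 : 0 ≤ t ^ 2 - s ^ 2 := by nlinarith
  nlinarith [mul_le_mul_of_nonneg_right h2 h4]

lemma sq_rpow_three_halves {r : ℝ} (hr : 0 ≤ r) : (r ^ 2) ^ ((3 : ℝ) / 2) = r ^ 3 := by
  rw [← Real.rpow_natCast_mul hr, ← Real.rpow_natCast]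
  norm_num

lemma one_sub_mul_pos {h γ g M Pmax μ : ℝ} (hh : 0 < h) (hg : 0 < g) (hM : 0 < M) (hP : 0 < Pmax)
    (hμ : 0 < μ)
    (hA3 : 0 ≤ 1 - h * γ - h * Pmax / (2 * M * ((Pmax / (M * g * μ)) ^ 2) ^ ((3:ℝ)/2))) :
    0 < 1 - h * γ := by
  have : 0 < h * Pmax / (2 * M * ((Pmax / (M * g * μ)) ^ 2) ^ ((3:ℝ)/2)) := by positivity
  linarith

/-- Under Assumption 3, `ℓ` is nondecreasing on all of `ℝ`: it is affine with positive slope up to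
the critical speed, continuous there, and covered by `mul_sq_add_div_le` beyond it. -/
lemma ell_monotone {h γ g M Pmax μ : ℝ} (hh : 0 < h) (hg : 0 < g) (hM : 0 < M) (hP : 0 < Pmax)
    (hμ : 0 < μ)
    (hA3 : 0 ≤ 1 - h * γ - h * Pmax / (2 * M * ((Pmax / (M * g * μ)) ^ 2) ^ ((3:ℝ)/2))) :
    Monotone (ell h γ g M Pmax μ) := by
  have hpos := one_sub_mul_pos hh hg hM hP hμ hA3
  have hr : 0 < Pmax / (M * g * μ) := by positivity
  rw [sq_rpow_three_halves hr.le] at hA3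
  -- Continuity at the critical speed: there `P_max / (M √w̄) = g μ`.
  have hcont : h * g * μ = h * Pmax / M / (Pmax / (M * g * μ)) := by field_simp
  have hq : 0 ≤ h * Pmax / M := by positivity
  have hA : h * Pmax / M / (2 * (Pmax / (M * g * μ)) ^ 3) ≤ 1 - h * γ := by
    have : h * Pmax / M / (2 * (Pmax / (M * g * μ)) ^ 3)
        = h * Pmax / (2 * M * (Pmax / (M * g * μ)) ^ 3) := by
      rw [div_div]
      ring_nf
    linarith
  intro v w hvw
  unfold ell
  generalize Pmax / (M * g * μ) = r at *
  have key : ∀ x y : ℝ, r ^ 2 ≤ x → x ≤ y →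
      (1 - h * γ) * x + h * Pmax / M / √x ≤ (1 - h * γ) * y + h * Pmax / M / √y := by
    intro x y hx hxy
    have hx0 : 0 ≤ x := (sq_nonneg r).trans hx
    have := mul_sq_add_div_le hr hq hA (Real.le_sqrt_of_sq_le hx) (Real.sqrt_le_sqrt hxy)
    rwa [Real.sq_sqrt hx0, Real.sq_sqrt (hx0.trans hxy)] at this
  simp only [← div_div]
  split_ifs with h1 h2 h2
  · nlinarith
  · have := key (r ^ 2) w le_rfl (not_le.mp h2).le
    rw [Real.sqrt_sq hr.le] at this
    nlinarith [mul_le_mul_of_nonneg_left h1 hpos.le]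
  · exact absurd (hvw.trans h2) h1
  · exact key v w (not_le.mp h1).le hvw

lemma forward_sweep {P : ℕ → Prop} {n : ℕ} (h1 : P 1)
    (hs : ∀ j, 1 ≤ j → j ≤ n - 1 → P j → P (j + 1)) : ∀ i, 1 ≤ i → i ≤ n → P i := by
  intro i hi
  induction i, hi using Nat.le_induction with
  | base => exact fun _ => h1
  | succ j hj ih => exact fun hjn => hs j hj (by omega) (ih (by omega))

lemma backward_sweep {P : ℕ → Prop} {n : ℕ} (hn : P n)
    (hs : ∀ j, 1 ≤ j → j ≤ n - 1 → P (j + 1) → P j) : ∀ i, 1 ≤ i → i ≤ n → P i := by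
  intro i hi hin
  refine Nat.decreasingInduction' (fun j hjn hij ih => ?_) hin hn
  exact hs j (hi.trans hij) (by omega) ih

theorem algorithm_bounds_monotone (n : ℕ) (hn : 2 ≤ n)
    (h γ g M Pmax μ c winit wfin : ℝ)
    (hh : 0 < h) (hg : 0 < g) (hM : 0 < M) (hP : 0 < Pmax) (hμ : 0 < μ)
    (hγ : 0 ≤ γ) (hc : 0 ≤ c) (hwinit : 0 ≤ winit) (hwfin : 0 ≤ wfin)
    (hA3 : 0 ≤ 1 - h * γ - h * Pmax / (2 * M * ((Pmax / (M * g * μ)) ^ 2) ^ ((3:ℝ)/2)))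
    (α wmin wmax : ℕ → ℝ)
    (hwmaxpos : ∀ i, 1 ≤ i → i ≤ n → 0 ≤ wmax i)
    (hwmax1 : wmax 1 = winit) (hwmaxn : wmax n = wfin)
    (hwmin1 : wmin 1 = winit) (hwminn : wmin n = wfin)
    (hwminmid : ∀ i, 2 ≤ i → i ≤ n - 1 → wmin i = 0)
    -- `z` and `y`: componentwise maximum over `X2 ∩ X4` and minimum over `X1 ∩ X3`
    (z y : ℕ → ℝ)
    (hz : ∀ i, 1 ≤ i → i ≤ n →
      IsGreatest {x : ℝ | ∃ w : ℕ → ℝ,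
        (memX2 n h γ g M Pmax μ c α wmax w ∧ memX4 n h γ g μ c α wmax w) ∧ w i = x}
        (z i))
    (hy : ∀ i, 1 ≤ i → i ≤ n →
      IsLeast {x : ℝ | ∃ w : ℕ → ℝ,
        (memX1 n h γ g M Pmax μ c α wmin w ∧ memX3 n h γ g μ c α wmin w) ∧ w i = x}
        (y i))
    -- the sequences `u^k`, `u^{k+1/2}`, `l^k`, `l^{k+1/2}` of Algorithm 1
    (u uh l lh : ℕ → ℕ → ℝ)
    (hu1 : ∀ i, u 1 i = wmax i)
    (hl1 : ∀ i, l 1 i = wmin i)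
    -- `u^{k+1/2} = B2(u^k)`
    (huh1 : ∀ k, 1 ≤ k → uh k 1 = u k 1)
    (huhs : ∀ k, 1 ≤ k → ∀ j, 1 ≤ j → j ≤ n - 1 →
      uh k (j + 1) = min (u k (j + 1))
        (ell h γ g M Pmax μ (uh k j) - h * g * (Real.sin (α j) + c)))
    -- `u^{k+1} = B4(u^{k+1/2})`
    (hun : ∀ k, 1 ≤ k → u (k + 1) n = uh k n)
    (hus : ∀ k, 1 ≤ k → ∀ j, 1 ≤ j → j ≤ n - 1 →
      u (k + 1) j = min (uh k j)
        ((u (k + 1) (j + 1) + h * g * (Real.sin (α j) + c + μ)) / (1 - h * γ)))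
    -- `l^{k+1/2} = B1(l^k)`
    (hlhn : ∀ k, 1 ≤ k → lh k n = l k n)
    (hlhs : ∀ k, 1 ≤ k → ∀ j, 1 ≤ j → j ≤ n - 1 →
      IsLeast {x : ℝ | l k j ≤ x ∧
        lh k (j + 1) + h * g * (Real.sin (α j) + c) ≤ ell h γ g M Pmax μ x} (lh k j))
    -- `l^{k+1} = B3(l^{k+1/2})`
    (hls1 : ∀ k, 1 ≤ k → l (k + 1) 1 = lh k 1)
    (hlss : ∀ k, 1 ≤ k → ∀ j, 1 ≤ j → j ≤ n - 1 →
      l (k + 1) (j + 1) = max (lh k (j + 1))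
        ((1 - h * γ) * l (k + 1) j - h * g * (Real.sin (α j) + c + μ))) :
    (∀ k, 1 ≤ k → ∀ i, 1 ≤ i → i ≤ n →
      u (k + 1) i ≤ uh k i ∧ uh k i ≤ u k i ∧
      lh k i ≤ l (k + 1) i ∧ l k i ≤ lh k i ∧
      z i ≤ u k i ∧ l k i ≤ y i) := by
  have hpos := one_sub_mul_pos hh hg hM hP hμ hA3
  have hmono := ell_monotone hh hg hM hP hμ hA3
  have hlast : ∀ {i}, i ≤ n → i = n ∨ i ≤ n - 1 := by intro i; omega
  have hfirst : ∀ {i}, 1 ≤ i → i ≤ n → i = 1 ∨ ∃ j, 1 ≤ j ∧ j ≤ n - 1 ∧ i = j + 1 := by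
    intro i h1 h2
    rcases h1.eq_or_lt with h | h
    · exact .inl h.symm
    · exact .inr ⟨i - 1, by omega, by omega, by omega⟩
  have upper : ∀ w, memX2 n h γ g M Pmax μ c α wmax w → memX4 n h γ g μ c α wmax w →
      ∀ k, 1 ≤ k → ∀ i, 1 ≤ i → i ≤ n → w i ≤ u k i := by
    intro w hw2 hw4 k hk
    induction k, hk using Nat.le_induction with
    | base => exact fun i h1 h2 => (hw2.1 i h1 h2).trans_eq (hu1 i).symm
    | succ k hk ih =>
      have hhalf : ∀ i, 1 ≤ i → i ≤ n → w i ≤ uh k i := by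
        refine forward_sweep ?_ fun j h1 h2 hj => ?_
        · rw [huh1 k hk]
          exact ih 1 le_rfl (by omega)
        · rw [huhs k hk j h1 h2]
          exact le_min (ih _ (by omega) (by omega))
            ((hw2.2 j h1 h2).trans (sub_le_sub_right (hmono hj) _))
      refine backward_sweep ?_ fun j h1 h2 hj => ?_
      · rw [hun k hk]
        exact hhalf n (by omega) le_rfl
      · rw [hus k hk j h1 h2]
        refine le_min (hhalf j h1 (by omega)) ((le_div_iff₀ hpos).mpr ?_)
        have := hw4.2 j h1 h2
        linarith
  have lower : ∀ w, memX1 n h γ g M Pmax μ c α wmin w → memX3 n h γ g μ c α wmin w →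
      ∀ k, 1 ≤ k → ∀ i, 1 ≤ i → i ≤ n → l k i ≤ w i := by
    intro w hw1 hw3 k hk
    induction k, hk using Nat.le_induction with
    | base => exact fun i h1 h2 => (hl1 i).trans_le (hw1.1 i h1 h2)
    | succ k hk ih =>
      have hhalf : ∀ i, 1 ≤ i → i ≤ n → lh k i ≤ w i := by
        refine backward_sweep ?_ fun j h1 h2 hj => ?_
        · rw [hlhn k hk]
          exact ih n (by omega) le_rfl
        · refine (hlhs k hk j h1 h2).2 ⟨ih j h1 (by omega), ?_⟩
          have := hw1.2 j h1 h2
          linarith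
      refine forward_sweep ?_ fun j h1 h2 hj => ?_
      · rw [hls1 k hk]
        exact hhalf 1 le_rfl (by omega)
      · rw [hlss k hk j h1 h2]
        exact max_le (hhalf _ (by omega) (by omega))
          ((sub_le_sub_right (mul_le_mul_of_nonneg_left hj hpos.le) _).trans (hw3.2 j h1 h2))
  intro k hk i h1 h2
  refine ⟨?_, ?_, ?_, ?_, ?_, ?_⟩
  · rcases hlast h2 with rfl | h
    · exact (hun k hk).le
    · exact (hus k hk i h1 h).trans_le (min_le_left _ _)
  · rcases hfirst h1 h2 with rfl | ⟨j, hj1, hj2, rfl⟩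
    · exact (huh1 k hk).le
    · exact (huhs k hk j hj1 hj2).trans_le (min_le_left _ _)
  · rcases hfirst h1 h2 with rfl | ⟨j, hj1, hj2, rfl⟩
    · exact (hls1 k hk).ge
    · exact (le_max_left _ _).trans_eq (hlss k hk j hj1 hj2).symm
  · rcases hlast h2 with rfl | h
    · exact (hlhn k hk).ge
    · exact (hlhs k hk i h1 h).1.1
  · obtain ⟨w, ⟨hw2, hw4⟩, hw⟩ := (hz i h1 h2).1
    exact hw ▸ upper w hw2 hw4 k hk i h1 h2
  · obtain ⟨w, ⟨hw1, hw3⟩, hw⟩ := (hy i h1 h2).1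
    exact hw ▸ lower w hw1 hw3 k hk i h1 h2
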